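/- Assume the Setting. Then it holds P-almost surely that 1_{{𝒱(Y_0) ≥ c^{1/(1−α)}·θ}} · P( ∩_{n=0}^{N} [ {𝒱(Y_n) ≥ c^{(Σ_{k=0}^{n−1} α^k)} · 𝒱(Y_0)^{(α^n)}} ∩ {Y_n ∈ ℍ_n} ] | σ(Y_0) ) ≥ [ Π_{n=1}^{N} inf( { p_n(v) : v ∈ ℍ_{n−1} with 𝒱(v) ≥ θ^{(α^{n−1})} } ∪ {1} ) ] · 1_{{𝒱(Y_0) ≥ c^{1/(1−α)}·θ} ∩ {Y_0 ∈ ℍ_0}}. -/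

import Mathlib

open MeasureTheory ProbabilityTheory
open scoped ENNReal

/-- If `m0` is independent of a sigma-algebra containing `m1` and `m2`, and `m1`, `m2` are
independent, then `m0 ⊔ m1` is independent of `m2`. -/
theorem aux_indep_sup {Ω : Type*} {m0 m1 m2 m3 : MeasurableSpace Ω} {mΩ : MeasurableSpace Ω}
    {P : Measure Ω} [IsProbabilityMeasure P] (h0 : m0 ≤ mΩ) (h1 : m1 ≤ mΩ) (h2 : m2 ≤ mΩ)
    (h13 : m1 ≤ m3) (h23 : m2 ≤ m3) (hi : Indep m0 m3 P) (h12 : Indep m1 m2 P) :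
    Indep (m0 ⊔ m1) m2 P := by
  rw [Indep_iff] at hi h12
  refine IndepSets.indep (p1 := {s | ∃ a b, MeasurableSet[m0] a ∧ MeasurableSet[m1] b ∧ s = a ∩ b})
    (p2 := {s | MeasurableSet[m2] s}) (sup_le h0 h1) h2 ?_ ?_ ?_ ?_ ?_
  · rintro _ ⟨a, b, ha, hb, rfl⟩ _ ⟨a2, b2, ha2, hb2, rfl⟩ _
    exact ⟨a ∩ a2, b ∩ b2, ha.inter ha2, hb.inter hb2, by ext; simp; tauto⟩
  · exact @MeasurableSpace.isPiSystem_measurableSet _ m2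
  · apply le_antisymm
    · apply sup_le
      · intro s hs
        exact MeasurableSpace.measurableSet_generateFrom
          ⟨s, Set.univ, hs, MeasurableSet.univ, by simp⟩
      · intro s hs
        exact MeasurableSpace.measurableSet_generateFrom
          ⟨Set.univ, s, MeasurableSet.univ, hs, by simp⟩
    · apply MeasurableSpace.generateFrom_le
      rintro _ ⟨a, b, ha, hb, rfl⟩
      exact MeasurableSet.inter ((le_sup_left : m0 ≤ m0 ⊔ m1) _ ha)
        ((le_sup_right : m1 ≤ m0 ⊔ m1) _ hb)
  · exact (@MeasurableSpace.generateFrom_measurableSet _ m2).symm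
  · rw [IndepSets_iff]
    rintro _ t ⟨a, b, ha, hb, rfl⟩ ht
    rw [Set.inter_assoc, hi a (b ∩ t) ha ((h13 _ hb).inter (h23 _ ht)), h12 b t hb ht,
      hi a b ha (h13 _ hb), mul_assoc]

/-- One-step Markov-type estimate. -/
theorem aux_step {H U Ω : Type*} [mH : MeasurableSpace H] [mU : MeasurableSpace U]
    {F : MeasurableSpace Ω} {mΩ : MeasurableSpace Ω}
    {P : Measure Ω} [IsProbabilityMeasure P] (hF : F ≤ mΩ) {Z : Ω → U} (hZ : Measurable Z)
    (hi : Indep F (MeasurableSpace.comap Z mU) P) {X : Ω → H} (hX : Measurable[F] X)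
    {C : Set Ω} (hC : MeasurableSet[F] C) {S : Set (H × U)} (hS : MeasurableSet S)
    {q : ℝ≥0∞} (hq : ∀ ω ∈ C, q ≤ P {ω' | (X ω, Z ω') ∈ S}) :
    q * P C ≤ P (C ∩ {ω | (X ω, Z ω) ∈ S}) := by
  let W : Ω → H × Prop := fun ω => (X ω, ω ∈ C)
  have hWF : Measurable[F] W := by
    refine Measurable.prodMk hX ?_
    exact (@measurableSet_setOfPred Ω F (fun ω => ω ∈ C)).1 hC
  have hW : Measurable W := hWF.mono hF le_rfl
  have hind : IndepFun W Z P := by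
    rw [IndepFun_iff_Indep]
    exact indep_of_indep_of_le_left hi hWF.comap_le
  have hmap := (indepFun_iff_map_prod_eq_prod_map_map hW.aemeasurable hZ.aemeasurable).1 hind
  let S' : Set ((H × Prop) × U) := {x | x.1.2 ∧ (x.1.1, x.2) ∈ S}
  have hS' : MeasurableSet S' := by
    refine MeasurableSet.inter (s₁ := {x : (H × Prop) × U | x.1.2}) ?_ ?_
    · exact measurableSet_setOfPred.2 (measurable_snd.comp measurable_fst)
    · exact (show Measurable fun x : (H × Prop) × U => (x.1.1, x.2) by fun_prop) hS
  have e1 : P (C ∩ {ω | (X ω, Z ω) ∈ S}) = P.map (fun ω => (W ω, Z ω)) S' := by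
    rw [Measure.map_apply (hW.prodMk hZ) hS']
    rfl
  rw [e1, hmap, Measure.prod_apply hS', lintegral_map (measurable_measure_prodMk_left hS') hW]
  calc q * P C = ∫⁻ ω, C.indicator (fun _ => q) ω ∂P := by
        rw [lintegral_indicator (hF _ hC)]; simp
    _ ≤ _ := by
        apply lintegral_mono
        intro ω
        by_cases hω : ω ∈ C
        · simp only [hω, Set.indicator_of_mem]
          rw [Measure.map_apply hZ (measurable_prodMk_left hS')]
          refine (hq ω hω).trans (measure_mono ?_)
          intro ω' h
          exact ⟨hω, h⟩
        · simp [hω]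

theorem aux_real {c α θ : ℝ} (hc0 : 0 < c) (hc1 : c ≤ 1) (hα : 1 < α) (hθ : 1 < θ) (n : ℕ)
    {x y : ℝ} (hx : c ^ (1 / (1 - α)) * θ ≤ x)
    (hy : c ^ (∑ k ∈ Finset.range n, α ^ k) * x ^ (α ^ n) ≤ y) : θ ^ (α ^ n) ≤ y := by
  have hαn : 0 < α ^ n := by positivity
  have h1 : (c ^ (1 / (1 - α)) * θ) ^ (α ^ n) ≤ x ^ (α ^ n) :=
    Real.rpow_le_rpow (by positivity) hx hαn.le
  rw [Real.mul_rpow (by positivity) (by positivity), ← Real.rpow_mul hc0.le] at h1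
  have h2 : c ^ (∑ k ∈ Finset.range n, α ^ k) * (c ^ (1 / (1 - α) * α ^ n) * θ ^ (α ^ n)) ≤ y :=
    (mul_le_mul_of_nonneg_left h1 (by positivity)).trans hy
  rw [← mul_assoc, ← Real.rpow_add hc0, geom_sum_eq hα.ne'] at h2
  have h3 : (α ^ n - 1) / (α - 1) + 1 / (1 - α) * α ^ n = 1 / (1 - α) := by
    have : α - 1 ≠ 0 := by linarith
    have : 1 - α ≠ 0 := by linarith
    field_simp
    ring
  rw [h3] at h2
  have h4 : 1 ≤ c ^ (1 / (1 - α)) :=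
    Real.one_le_rpow_of_pos_of_le_one_of_nonpos hc0 hc1
      (div_nonpos_of_nonneg_of_nonpos zero_le_one (by linarith))
  exact (le_mul_of_one_le_left (by positivity) h4).trans h2

theorem aux_real2 {c α : ℝ} (hc0 : 0 < c) (hα : 1 < α) (n : ℕ)
    {x y z : ℝ} (hx : 0 ≤ x)
    (hy : c ^ (∑ k ∈ Finset.range n, α ^ k) * x ^ (α ^ n) ≤ y) (hz : c * y ^ α ≤ z) :
    c ^ (∑ k ∈ Finset.range (n + 1), α ^ k) * x ^ (α ^ (n + 1)) ≤ z := by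
  refine le_trans ?_ hz
  have h1 := Real.rpow_le_rpow (by positivity) hy (by linarith : 0 ≤ α)
  rw [Real.mul_rpow (by positivity) (by positivity), ← Real.rpow_mul hc0.le,
    ← Real.rpow_mul hx] at h1
  have h2 := mul_le_mul_of_nonneg_left h1 hc0.le
  refine le_trans (le_of_eq ?_) h2
  rw [← mul_assoc, Finset.sum_range_succ', pow_zero, Real.rpow_add hc0, Real.rpow_one,
    Finset.sum_mul, pow_succ α n]
  simp only [pow_succ]
  ring

theorem aux_main
    {H U Ω : Type*} [mH : MeasurableSpace H] [mU : MeasurableSpace U] [mΩ : MeasurableSpace Ω]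
    (P : Measure Ω) [IsProbabilityMeasure P]
    (Φ : H → U → H) (hΦ : Measurable (Function.uncurry Φ))
    (N : ℕ)
    (c α θ : ℝ) (hc0 : 0 < c) (hc1 : c ≤ 1) (hα : 1 < α) (hθ : 1 < θ)
    (Hs : ℕ → Set H) (hHs : ∀ n ≤ N, MeasurableSet (Hs n))
    (Z : ℕ → Ω → U) (hZmeas : ∀ n, 1 ≤ n → n ≤ N → Measurable (Z n))
    (hZindep : iIndepFun (fun n : (Finset.Icc 1 N) => Z (n : ℕ)) P)
    (Y : ℕ → Ω → H) (hY0meas : Measurable (Y 0))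
    (hYrec : ∀ n, 1 ≤ n → n ≤ N → ∀ ω, Y n ω = Φ (Y (n - 1) ω) (Z n ω))
    (hYZindep : Indep (MeasurableSpace.comap (Y 0) mH)
        (⨆ n ∈ Finset.Icc 1 N, MeasurableSpace.comap (Z n) mU) P)
    (V : H → ℝ) (hV : Measurable V) (hVpos : ∀ x, 0 ≤ V x)
    (p : ℕ → H → ℝ≥0∞)
    (hp : ∀ n, 1 ≤ n → n ≤ N → ∀ v : H,
        p n v = P {ω | c * V v ^ α ≤ V (Φ v (Z n ω)) ∧ Φ v (Z n ω) ∈ Hs n})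
    (A : Set Ω) (hA : MeasurableSet[MeasurableSpace.comap (Y 0) mH] A)
    (hAV : ∀ ω ∈ A, c ^ (1 / (1 - α)) * θ ≤ V (Y 0 ω) ∧ Y 0 ω ∈ Hs 0) (n : ℕ) (hn : n ≤ N) :
    Measurable[MeasurableSpace.comap (Y 0) mH ⊔
        ⨆ k ∈ Finset.Icc 1 n, MeasurableSpace.comap (Z k) mU] (Y n) ∧
    MeasurableSet[MeasurableSpace.comap (Y 0) mH ⊔
        ⨆ k ∈ Finset.Icc 1 n, MeasurableSpace.comap (Z k) mU] (⋂ m ∈ Finset.Iic n,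
            {ω' | c ^ (∑ k ∈ Finset.range m, α ^ k) * V (Y 0 ω') ^ (α ^ m) ≤ V (Y m ω') ∧
              Y m ω' ∈ Hs m}) ∧
    (∏ m ∈ Finset.Icc 1 n,
          (sInf ((p m '' {v | v ∈ Hs (m - 1) ∧ θ ^ (α ^ (m - 1)) ≤ V v}) ∪ {1}))) * P A ≤
      P (A ∩ ⋂ m ∈ Finset.Iic n,
            {ω' | c ^ (∑ k ∈ Finset.range m, α ^ k) * V (Y 0 ω') ^ (α ^ m) ≤ V (Y m ω') ∧
              Y m ω' ∈ Hs m}) := by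
  have hpow : ∀ r : ℝ, Measurable fun x : ℝ => x ^ r := fun r => by fun_prop
  induction n with
  | zero =>
    have e : Measurable[MeasurableSpace.comap (Y 0) mH] (Y 0) := comap_measurable _
    have e' : Measurable[MeasurableSpace.comap (Y 0) mH ⊔
        ⨆ k ∈ Finset.Icc 1 0, MeasurableSpace.comap (Z k) mU] (Y 0) := e.mono le_sup_left le_rfl
    have hI : (⋂ m ∈ Finset.Iic 0,
            {ω' | c ^ (∑ k ∈ Finset.range m, α ^ k) * V (Y 0 ω') ^ (α ^ m) ≤ V (Y m ω') ∧
              Y m ω' ∈ Hs m}) = Y 0 ⁻¹' Hs 0 := by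
      ext ω; simp
    refine ⟨e', ?_, ?_⟩
    · rw [hI]
      exact e' (hHs 0 hn)
    · rw [hI]
      simp only [show Finset.Icc 1 0 = (∅ : Finset ℕ) from rfl, Finset.prod_empty, one_mul]
      exact measure_mono fun ω h => ⟨h, (hAV ω h).2⟩
  | succ n ih =>
    obtain ⟨ih1, ih2, ih3⟩ := ih (by omega)
    have hle : ∀ k ≤ N, (⨆ j ∈ Finset.Icc 1 k, MeasurableSpace.comap (Z j) mU) ≤ mΩ := by
      intro k hk
      refine iSup₂_le fun j hj => ?_
      rw [Finset.mem_Icc] at hj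
      exact (hZmeas j hj.1 (hj.2.trans hk)).comap_le
    have hFle : ∀ k ≤ N, MeasurableSpace.comap (Y 0) mH ⊔
        (⨆ j ∈ Finset.Icc 1 k, MeasurableSpace.comap (Z j) mU) ≤ mΩ :=
      fun k hk => sup_le hY0meas.comap_le (hle k hk)
    have hmono : MeasurableSpace.comap (Y 0) mH ⊔
        (⨆ j ∈ Finset.Icc 1 n, MeasurableSpace.comap (Z j) mU) ≤ MeasurableSpace.comap (Y 0) mH ⊔
        (⨆ j ∈ Finset.Icc 1 (n + 1), MeasurableSpace.comap (Z j) mU) := by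
      refine sup_le_sup_left (biSup_mono fun j hj => ?_) _
      simp only [Finset.mem_Icc] at hj ⊢
      omega
    have hZF : Measurable[MeasurableSpace.comap (Y 0) mH ⊔
        (⨆ j ∈ Finset.Icc 1 (n + 1), MeasurableSpace.comap (Z j) mU)] (Z (n + 1)) := by
      refine (comap_measurable (Z (n + 1))).mono ?_ le_rfl
      refine le_trans ?_ le_sup_right
      exact le_iSup₂_of_le (f := fun j (_ : j ∈ Finset.Icc 1 (n + 1)) =>
        MeasurableSpace.comap (Z j) mU) (n + 1) (by simp) le_rfl
    have hY1 : Measurable[MeasurableSpace.comap (Y 0) mH ⊔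
        (⨆ j ∈ Finset.Icc 1 (n + 1), MeasurableSpace.comap (Z j) mU)] (Y (n + 1)) := by
      have : Y (n + 1) = fun ω => Function.uncurry Φ (Y n ω, Z (n + 1) ω) := by
        funext ω
        exact hYrec (n + 1) (by omega) hn ω
      rw [this]
      exact hΦ.comp ((ih1.mono hmono le_rfl).prodMk hZF)
    have hY0F : Measurable[MeasurableSpace.comap (Y 0) mH ⊔
        (⨆ j ∈ Finset.Icc 1 (n + 1), MeasurableSpace.comap (Z j) mU)] (Y 0) :=
      (comap_measurable (Y 0)).mono le_sup_left le_rfl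
    have hI : (⋂ m ∈ Finset.Iic (n + 1),
            {ω' | c ^ (∑ k ∈ Finset.range m, α ^ k) * V (Y 0 ω') ^ (α ^ m) ≤ V (Y m ω') ∧
              Y m ω' ∈ Hs m}) = (⋂ m ∈ Finset.Iic n,
            {ω' | c ^ (∑ k ∈ Finset.range m, α ^ k) * V (Y 0 ω') ^ (α ^ m) ≤ V (Y m ω') ∧
              Y m ω' ∈ Hs m}) ∩ {ω' | c ^ (∑ k ∈ Finset.range (n + 1), α ^ k) *
                V (Y 0 ω') ^ (α ^ (n + 1)) ≤ V (Y (n + 1) ω') ∧ Y (n + 1) ω' ∈ Hs (n + 1)} := by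
      ext ω
      simp only [Set.mem_iInter, Finset.mem_Iic, Set.mem_inter_iff]
      constructor
      · intro h
        exact ⟨fun i hi => h i (by omega), h (n + 1) le_rfl⟩
      · rintro ⟨h, h'⟩ i hi
        rcases Nat.lt_or_ge n i with hlt | hge
        · obtain rfl : i = n + 1 := by omega
          exact h'
        · exact h i hge
    refine ⟨hY1, ?_, ?_⟩
    · rw [hI]
      refine MeasurableSet.inter (hmono _ ih2) (MeasurableSet.inter ?_ (hY1 (hHs _ hn)))
      exact measurableSet_le (((hpow _).comp (hV.comp hY0F)).const_mul _) (hV.comp hY1)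
    · have hind : Indep (MeasurableSpace.comap (Y 0) mH ⊔
        (⨆ j ∈ Finset.Icc 1 n, MeasurableSpace.comap (Z j) mU))
          (MeasurableSpace.comap (Z (n + 1)) mU) P := by
        refine aux_indep_sup hY0meas.comap_le (hle n (by omega))
          (hZmeas (n + 1) (by omega) hn).comap_le ?_ ?_ hYZindep ?_
        · refine biSup_mono fun j hj => ?_
          simp only [Finset.mem_Icc] at hj ⊢
          omega
        · exact le_iSup₂_of_le (f := fun j (_ : j ∈ Finset.Icc 1 N) =>
            MeasurableSpace.comap (Z j) mU) (n + 1) (by simp; omega) le_rfl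
        · have h := indep_iSup_of_disjoint
            (m := fun i : Finset.Icc 1 N => MeasurableSpace.comap (Z (i : ℕ)) mU)
            (fun i => (hZmeas i (Finset.mem_Icc.1 i.2).1 (Finset.mem_Icc.1 i.2).2).comap_le)
            hZindep (S := {i | (i : ℕ) ≤ n}) (T := {i | (i : ℕ) = n + 1}) (by
              rw [Set.disjoint_left]
              intro i hi hi'
              simp only [Set.mem_ofPred_eq] at hi hi'
              omega)
          refine indep_of_indep_of_le_left (indep_of_indep_of_le_right h ?_) ?_
          · exact le_iSup₂_of_le (f := fun (j : Finset.Icc 1 N) (_ : j ∈ {i : Finset.Icc 1 N |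
              (i : ℕ) = n + 1}) => MeasurableSpace.comap (Z j) mU)
              ⟨n + 1, by simp; omega⟩ (by simp) le_rfl
          · refine iSup₂_le fun j hj => ?_
            rw [Finset.mem_Icc] at hj
            exact le_iSup₂_of_le (f := fun (j : Finset.Icc 1 N) (_ : j ∈ {i : Finset.Icc 1 N |
              (i : ℕ) ≤ n}) => MeasurableSpace.comap (Z j) mU)
              ⟨j, by simp; omega⟩ (by simp; omega) le_rfl
      have hS : MeasurableSet {x : H × U | c * V x.1 ^ α ≤ V (Φ x.1 x.2) ∧
          Φ x.1 x.2 ∈ Hs (n + 1)} := by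
        refine MeasurableSet.inter ?_ (hΦ (hHs _ hn))
        exact measurableSet_le (((hpow _).comp (hV.comp measurable_fst)).const_mul _)
          (hV.comp hΦ)
      have hstep := aux_step (hFle n (by omega)) (hZmeas (n + 1) (by omega) hn) hind ih1
        (MeasurableSet.inter ((le_sup_left : MeasurableSpace.comap (Y 0) mH ≤ _) _ hA) ih2) hS
        (q := sInf ((p (n + 1) '' {v | v ∈ Hs (n + 1 - 1) ∧ θ ^ (α ^ (n + 1 - 1)) ≤ V v}) ∪ {1}))
        (by
          rintro ω ⟨hωA, hω⟩
          simp only [Set.mem_iInter, Finset.mem_Iic] at hω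
          have hωn := hω n le_rfl
          refine sInf_le (Or.inl ⟨Y n ω, ⟨hωn.2, ?_⟩, ?_⟩)
          · exact aux_real hc0 hc1 hα hθ n (hAV ω hωA).1 hωn.1
          · rw [hp (n + 1) (by omega) hn]
            rfl)
      rw [Finset.prod_Icc_succ_top (by omega), mul_comm (∏ m ∈ Finset.Icc 1 n, _), mul_assoc]
      refine (mul_le_mul_right ih3 _).trans (hstep.trans (measure_mono ?_))
      rw [hI]
      rintro ω ⟨⟨hωA, hω⟩, hω2⟩
      refine ⟨hωA, hω, ?_⟩
      simp only [Set.mem_iInter, Finset.mem_Iic] at hω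
      have hr := hYrec (n + 1) (by omega) hn ω
      simp only [Nat.add_sub_cancel] at hr
      simp only [Set.mem_ofPred_eq, hr]
      exact ⟨aux_real2 hc0 hα n (hVpos _) (hω n le_rfl).1 hω2.1, hω2.2⟩

/-- In the abstract Markov-chain setting, on the event `{𝒱(Y_0) ≥ c^{1/(1−α)}·θ}`, the
conditional probability given `σ(Y_0)` of the event
`∩_{n=0}^{N} [{𝒱(Y_n) ≥ c^{Σ_{k<n} α^k}·𝒱(Y_0)^{α^n}} ∩ {Y_n ∈ ℍ_n}]` is bounded below,
`P`-almost surely, by the product over `n = 1,...,N` of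
`inf({p_n(v) : v ∈ ℍ_{n−1}, 𝒱(v) ≥ θ^{α^{n−1}}} ∪ {1})` times the indicator of
`{𝒱(Y_0) ≥ c^{1/(1−α)}·θ} ∩ {Y_0 ∈ ℍ_0}`. -/
theorem conditional_probability_lower_full
    {H U Ω : Type*} [mH : MeasurableSpace H] [mU : MeasurableSpace U] [mΩ : MeasurableSpace Ω]
    (P : Measure Ω) [IsProbabilityMeasure P]
    (Φ : H → U → H) (hΦ : Measurable (Function.uncurry Φ))
    (N : ℕ) (hN : 1 ≤ N)
    (c α θ : ℝ) (hc0 : 0 < c) (hc1 : c ≤ 1) (hα : 1 < α) (hθ : 1 < θ)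
    (Hs : ℕ → Set H) (hHs : ∀ n ≤ N, MeasurableSet (Hs n))
    (Z : ℕ → Ω → U) (hZmeas : ∀ n, 1 ≤ n → n ≤ N → Measurable (Z n))
    (hZindep : iIndepFun (fun n : (Finset.Icc 1 N) => Z (n : ℕ)) P)
    (hZid : ∀ n, 1 ≤ n → n ≤ N → P.map (Z n) = P.map (Z 1))
    (Y : ℕ → Ω → H) (hY0meas : Measurable (Y 0))
    (hYrec : ∀ n, 1 ≤ n → n ≤ N → ∀ ω, Y n ω = Φ (Y (n - 1) ω) (Z n ω))
    (hYZindep : Indep (MeasurableSpace.comap (Y 0) mH)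
        (⨆ n ∈ Finset.Icc 1 N, MeasurableSpace.comap (Z n) mU) P)
    (V : H → ℝ) (hV : Measurable V) (hVpos : ∀ x, 0 ≤ V x)
    (p : ℕ → H → ℝ≥0∞)
    (hp : ∀ n, 1 ≤ n → n ≤ N → ∀ v : H,
        p n v = P {ω | c * V v ^ α ≤ V (Φ v (Z n ω)) ∧ Φ v (Z n ω) ∈ Hs n}) :
    ∀ᵐ ω ∂P,
      (∏ n ∈ Finset.Icc 1 N,
          (sInf ((p n '' {v | v ∈ Hs (n - 1) ∧ θ ^ (α ^ (n - 1)) ≤ V v}) ∪ {1})).toReal) *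
        Set.indicator ({ω' | c ^ (1 / (1 - α)) * θ ≤ V (Y 0 ω')} ∩ {ω' | Y 0 ω' ∈ Hs 0})
          (fun _ => (1 : ℝ)) ω ≤
      Set.indicator {ω' | c ^ (1 / (1 - α)) * θ ≤ V (Y 0 ω')} (fun _ => (1 : ℝ)) ω *
        (P[Set.indicator (⋂ n ∈ Finset.Iic N,
            {ω' | c ^ (∑ k ∈ Finset.range n, α ^ k) * V (Y 0 ω') ^ (α ^ n) ≤ V (Y n ω') ∧
              Y n ω' ∈ Hs n}) (fun _ => (1 : ℝ)) |
            MeasurableSpace.comap (Y 0) mH]) ω := by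
  have hm : MeasurableSpace.comap (Y 0) mH ≤ mΩ := hY0meas.comap_le
  have hY0 : Measurable[MeasurableSpace.comap (Y 0) mH] (Y 0) := comap_measurable _
  have key := fun A hA hAV => aux_main P Φ hΦ N c α θ hc0 hc1 hα hθ Hs hHs Z hZmeas hZindep Y
    hY0meas hYrec hYZindep V hV hVpos p hp A hA hAV N le_rfl
  set G : Set Ω := ⋂ n ∈ Finset.Iic N,
            {ω' | c ^ (∑ k ∈ Finset.range n, α ^ k) * V (Y 0 ω') ^ (α ^ n) ≤ V (Y n ω') ∧
              Y n ω' ∈ Hs n} with hG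
  set D : Set Ω := {ω' | c ^ (1 / (1 - α)) * θ ≤ V (Y 0 ω')} ∩ {ω' | Y 0 ω' ∈ Hs 0} with hD
  have hDm : MeasurableSet[MeasurableSpace.comap (Y 0) mH] D :=
    MeasurableSet.inter (measurableSet_le measurable_const (hV.comp hY0)) (hY0 (hHs 0 (by omega)))
  have hGm : MeasurableSet G := by
    have h := (key ∅ (@MeasurableSet.empty Ω (MeasurableSpace.comap (Y 0) mH)) (by simp)).2.1
    refine (sup_le hm (iSup₂_le fun j hj => ?_)) _ h
    rw [Finset.mem_Icc] at hj
    exact (hZmeas j hj.1 hj.2).comap_le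
  rw [← ENNReal.toReal_prod]
  set K : ℝ≥0∞ := ∏ n ∈ Finset.Icc 1 N,
          (sInf ((p n '' {v | v ∈ Hs (n - 1) ∧ θ ^ (α ^ (n - 1)) ≤ V v}) ∪ {1})) with hK
  have hmain : (fun ω => K.toReal * D.indicator (fun _ => (1 : ℝ)) ω) ≤ᵐ[P]
      P[G.indicator (fun _ => (1 : ℝ)) | MeasurableSpace.comap (Y 0) mH] := by
    have hfm : StronglyMeasurable[MeasurableSpace.comap (Y 0) mH]
        (fun ω => K.toReal * D.indicator (fun _ => (1 : ℝ)) ω) :=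
      (stronglyMeasurable_const.indicator hDm).const_mul _
    have hfi : Integrable (fun ω => K.toReal * D.indicator (fun _ => (1 : ℝ)) ω) P :=
      ((integrable_const (1 : ℝ)).indicator (hm _ hDm)).const_mul _
    have hgi : Integrable (G.indicator (fun _ => (1 : ℝ))) P :=
      (integrable_const (1 : ℝ)).indicator hGm
    refine ae_le_of_ae_le_trim (hm := hm) ?_
    refine ae_le_of_forall_setIntegral_le (hfi.trim hm hfm)
      (integrable_condExp.trim hm stronglyMeasurable_condExp) ?_
    intro s hs _
    rw [← setIntegral_trim hm hfm hs, ← setIntegral_trim hm stronglyMeasurable_condExp hs,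
      setIntegral_condExp hm hgi hs, integral_const_mul, setIntegral_indicator (hm _ hDm),
      setIntegral_indicator hGm]
    simp only [setIntegral_const, smul_eq_mul, mul_one]
    have h := (key (s ∩ D) (hs.inter hDm) (fun ω hω => hω.2)).2.2
    have h2 : K * P (s ∩ D) ≤ P (s ∩ G) :=
      h.trans (measure_mono fun ω hω => ⟨hω.1.1, hω.2⟩)
    have h3 := ENNReal.toReal_mono (measure_ne_top P _) h2
    rwa [ENNReal.toReal_mul] at h3
  filter_upwards [hmain] with ω hω
  by_cases h : c ^ (1 / (1 - α)) * θ ≤ V (Y 0 ω)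
  · rw [Set.indicator_of_mem (s := {ω' | c ^ (1 / (1 - α)) * θ ≤ V (Y 0 ω')}) h, one_mul]
    exact hω
  · rw [Set.indicator_of_notMem (s := {ω' | c ^ (1 / (1 - α)) * θ ≤ V (Y 0 ω')}) h, zero_mul,
      Set.indicator_of_notMem (s := D) (fun hd => h hd.1), mul_zero]
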